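/- Suppose r is a δ-refutation test for 𝓒 over 𝒟 with m samples, and let 𝒟' be any label distribution consistent with 𝒟. Build the hybrid hypotheses h_1, …, h_m from F = r. Then there exists h in the finite list consisting of the constant-zero function together with h_1, …, h_m such that cor_{𝒟'}(h) ≥ (2/(3m)) · (sup_{c∈𝓒} cor_{𝒟'}(c) − δ). -/

import Mathlib

/-!
The proof is a hybrid argument. Replace the `m` samples from `𝒟'` one at a time by samples from
`𝒟 ⊗ U`; the acceptance probabilities `a_0, …, a_m` along the way satisfy
`a_i - a_{i+1} = cor_{𝒟'}(h_i) / 2` (`hybridVal_sub_succ`, which rests on the one-coordinate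
resampling identity `pi_update_eq_map`). If the supremum `S` of the correlations is below `δ`, the
zero hypothesis suffices. Otherwise completeness and soundness give `a_0 - a_m ≥ 1/3`, so the
correlations sum to at least `2/3` and one of them is at least `2 / (3m)`. It remains to see that
`S - δ ≤ 1`: `S ≤ 1` always, and `δ > 0`, because for `δ ≤ 0` completeness would apply to `𝒟 ⊗ U`
itself, where all correlations vanish, and contradict soundness.

The iterated real supremum `⨆ c ∈ 𝓒` assigns the value `0` to every `c ∉ 𝓒`; neither the bound
`S ≤ 1` nor the vanishing of `S` for `𝒟 ⊗ U` is affected.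
-/

open MeasureTheory ProbabilityTheory

noncomputable section

/-- The ±1 real value of a Boolean label (`true` encodes the label 1, `false` the label −1). -/
def sgn (b : Bool) : ℝ := if b then 1 else -1

/-- The uniform probability measure on the labels {−1, 1} (encoded as `Bool`). -/
def unifLabel : Measure Bool := (PMF.uniformOfFintype Bool).toMeasure

instance : IsProbabilityMeasure unifLabel :=
  PMF.toMeasure.isProbabilityMeasure _

/-- The hybrid product measure on `(X × {−1,1})^m` in which the coordinates of index `< i`
are drawn i.i.d. from `P = 𝒟 ⊗ U` and the remaining coordinates are drawn i.i.d. from `𝒟'`. -/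
def hybridMeasure {X : Type*} [MeasurableSpace X] (m : ℕ) (D : Measure X)
    (D' : Measure (X × Bool)) (i : ℕ) : Measure (Fin m → X × Bool) :=
  Measure.pi (fun j : Fin m => if (j : ℕ) < i then D.prod unifLabel else D')

/-- The hybrid value `a_i(F) = ∫ F d(P^{⊗i} ⊗ (𝒟')^{⊗(m−i)})`: the first `i` coordinates are
drawn i.i.d. from `P = 𝒟 ⊗ U` and the remaining `m − i` are drawn i.i.d. from `𝒟'`. -/
def hybridVal {X : Type*} [MeasurableSpace X] (m : ℕ) (D : Measure X)
    (D' : Measure (X × Bool)) (F : (Fin m → X × Bool) → ℝ) (i : ℕ) : ℝ :=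
  ∫ z, F z ∂(hybridMeasure m D D' i)

/-- The hybrid function `W_{i,b}(x)`: run `F` with the `i`-th coordinate planted to `(x, b)`,
the coordinates before `i` drawn i.i.d. from `P = 𝒟 ⊗ U` and the coordinates after `i` drawn
i.i.d. from `𝒟'`.  (The `i`-th coordinate of the integration variable is overwritten by
`Function.update`, so integrating it out over a probability measure has no effect.)
Here `i` is the 0-based index corresponding to the paper's 1-based index `i + 1`. -/
def hybridW {X : Type*} [MeasurableSpace X] (m : ℕ) (D : Measure X)
    (D' : Measure (X × Bool)) (F : (Fin m → X × Bool) → ℝ) (i : Fin m) (b : Bool)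
    (x : X) : ℝ :=
  ∫ z, F (Function.update z i (x, b)) ∂(hybridMeasure m D D' i)

/-- The hybrid hypothesis `h_i(x) = W_{i,1}(x) − W_{i,−1}(x) ∈ [−1,1]`. -/
def hybridHyp {X : Type*} [MeasurableSpace X] (m : ℕ) (D : Measure X)
    (D' : Measure (X × Bool)) (F : (Fin m → X × Bool) → ℝ) (i : Fin m) (x : X) : ℝ :=
  hybridW m D D' F i true x - hybridW m D D' F i false x

/-- The correlation of a hypothesis `f : X → ℝ` with the labels under a distribution `𝒟'`
on example-label pairs: `cor_{𝒟'}(f) = E_{(x,y)∼𝒟'}[f(x)·y]`. -/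
def cor {X : Type*} [MeasurableSpace X] (D' : Measure (X × Bool)) (f : X → ℝ) : ℝ :=
  ∫ z, f z.1 * sgn z.2 ∂D'

/-- A `δ`-refutation test for the concept class `𝓒` over `𝒟` with `m` samples: a measurable
function `r : (X × {−1,1})^m → [0,1]` (the acceptance probability of a possibly randomized
algorithm, acceptance meaning output "structure") such that

* (completeness) `∫ r d(𝒟')^{⊗m} ≥ 2/3` for every label distribution `𝒟'` consistent with
  `𝒟` satisfying `sup_{c∈𝓒} cor_{𝒟'}(c) ≥ δ`; and
* (soundness) `∫ r d(𝒟 ⊗ U)^{⊗m} ≤ 1/3`. -/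
def IsRefutationTest {X : Type*} [MeasurableSpace X] (D : Measure X)
    (𝓒 : Set (X → Bool)) (δ : ℝ) (m : ℕ) (r : (Fin m → X × Bool) → ℝ) : Prop :=
  Measurable r ∧ (∀ z, r z ∈ Set.Icc (0 : ℝ) 1) ∧
    (∀ D' : Measure (X × Bool), IsProbabilityMeasure D' → D'.map Prod.fst = D →
      δ ≤ (⨆ c ∈ 𝓒, cor D' (fun x => sgn (c x))) →
      (2 : ℝ) / 3 ≤ ∫ s, r s ∂(Measure.pi fun _ : Fin m => D')) ∧
    (∫ s, r s ∂(Measure.pi fun _ : Fin m => D.prod unifLabel)) ≤ (1 : ℝ) / 3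

/-- Resampling one coordinate of a product measure: drawing `z` from `∏ μ_j` and then overwriting
its `i`-th coordinate by an independent draw from `ν` gives the product measure whose `i`-th factor
is replaced by `ν`. -/
lemma pi_update_eq_map {ι Y : Type*} [Fintype ι] [DecidableEq ι] [MeasurableSpace Y]
    (μ : ι → Measure Y) [∀ j, IsProbabilityMeasure (μ j)] (i : ι)
    (ν : Measure Y) [IsProbabilityMeasure ν] :
    Measure.pi (Function.update μ i ν) =
      (ν.prod (Measure.pi μ)).map (fun q : Y × (ι → Y) => Function.update q.2 i q.1) := by
  have hinst : ∀ j, IsProbabilityMeasure (Function.update μ i ν j) := by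
    intro j
    by_cases h : j = i
    · subst h; simpa using ‹IsProbabilityMeasure ν›
    · rw [Function.update_of_ne h]; infer_instance
  have hmeas : Measurable (fun q : Y × (ι → Y) => Function.update q.2 i q.1) := by
    refine measurable_pi_lambda _ fun j => ?_
    by_cases h : j = i
    · subst h; simpa using measurable_fst
    · simp only [Function.update_of_ne h]; fun_prop
  refine Measure.pi_eq fun s hs => ?_
  rw [Measure.map_apply hmeas (MeasurableSet.univ_pi hs)]
  have hpre : (fun q : Y × (ι → Y) => Function.update q.2 i q.1) ⁻¹' (Set.univ.pi s) =
      s i ×ˢ (Set.univ.pi (Function.update s i Set.univ)) := by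
    ext ⟨p, z⟩
    simp only [Set.mem_preimage, Set.mem_pi, Set.mem_univ, true_implies, Set.mem_prod]
    constructor
    · intro h
      refine ⟨by simpa using h i, fun j => ?_⟩
      by_cases hj : j = i
      · subst hj; simp
      · simpa [Function.update_of_ne hj] using h j
    · rintro ⟨h1, h2⟩ j
      by_cases hj : j = i
      · subst hj; simpa using h1
      · simpa [Function.update_of_ne hj] using h2 j
  rw [hpre, Measure.prod_prod, Measure.pi_pi,
    ← Finset.mul_prod_erase _ _ (Finset.mem_univ i),
    ← Finset.mul_prod_erase (a := i) (f := fun j => Function.update μ i ν j (s j)) _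
      (Finset.mem_univ i)]
  simp only [Function.update_self, measure_univ, one_mul]
  congr 1
  refine Finset.prod_congr rfl fun j hj => ?_
  rw [Function.update_of_ne (Finset.ne_of_mem_erase hj),
    Function.update_of_ne (Finset.ne_of_mem_erase hj)]

instance {X : Type*} [MeasurableSpace X] (m : ℕ) (D : Measure X) [IsProbabilityMeasure D]
    (D' : Measure (X × Bool)) [IsProbabilityMeasure D'] (i : ℕ) (j : Fin m) :
    IsProbabilityMeasure (if (j : ℕ) < i then D.prod unifLabel else D') := by
  split_ifs <;> infer_instance

instance {X : Type*} [MeasurableSpace X] (m : ℕ) (D : Measure X) [IsProbabilityMeasure D]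
    (D' : Measure (X × Bool)) [IsProbabilityMeasure D'] (i : ℕ) :
    IsProbabilityMeasure (hybridMeasure m D D' i) := by
  unfold hybridMeasure; infer_instance

lemma integral_unifLabel (f : Bool → ℝ) :
    ∫ b, f b ∂unifLabel = (f true + f false) / 2 := by
  unfold unifLabel
  rw [PMF.integral_eq_sum]
  simp [PMF.uniformOfFintype_apply]
  ring

lemma measurable_sgn : Measurable sgn := measurable_of_countable _

lemma abs_sgn (b : Bool) : |sgn b| = 1 := by cases b <;> simp [sgn]

/-- The correlation of a `±1`-valued hypothesis is at most `1`. Measurability is not needed: the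
Bochner integral of a nonmeasurable function is `0`. -/
lemma cor_sgn_le_one {X : Type*} [MeasurableSpace X] (D' : Measure (X × Bool))
    [IsProbabilityMeasure D'] (c : X → Bool) : cor D' (fun x => sgn (c x)) ≤ 1 := by
  have h := norm_integral_le_of_norm_le_const (μ := D') (C := 1)
    (f := fun z : X × Bool => sgn (c z.1) * sgn z.2)
    (Filter.Eventually.of_forall fun z => by simp [abs_sgn])
  simp only [probReal_univ, mul_one] at h
  exact (le_abs_self _).trans h

/-- Under uniformly random labels every hypothesis has correlation zero. -/
lemma cor_prod_unifLabel {X : Type*} [MeasurableSpace X] (D : Measure X) [IsProbabilityMeasure D]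
    (c : X → Bool) (hc : Measurable c) :
    cor (D.prod unifLabel) (fun x => sgn (c x)) = 0 := by
  unfold cor
  rw [integral_prod]
  · simp [integral_unifLabel, sgn]
  · refine Integrable.of_bound (C := 1) ?_ (Filter.Eventually.of_forall fun z => ?_)
    · exact ((measurable_sgn.comp (hc.comp measurable_fst)).mul
        (measurable_sgn.comp measurable_snd)).aestronglyMeasurable
    · simp [abs_sgn]

/-- Each step of the hybrid argument: the drop `a_i - a_{i+1}` in acceptance probability is half
the correlation of `h_i`. Both values integrate the same function `G(x, b) = W_{i,b}(x)`, against
`𝒟'` and `𝒟 ⊗ U` respectively, and `G(x, y) - (G(x, 1) + G(x, -1)) / 2 = h_i(x) y / 2`. -/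
lemma hybridVal_sub_succ {X : Type*} [MeasurableSpace X]
    (D : Measure X) [IsProbabilityMeasure D] (m : ℕ) (r : (Fin m → X × Bool) → ℝ)
    (hrm : Measurable r) (hr01 : ∀ z, r z ∈ Set.Icc (0 : ℝ) 1)
    (D' : Measure (X × Bool)) [IsProbabilityMeasure D'] (hD' : D'.map Prod.fst = D)
    (i : Fin m) :
    hybridVal m D D' r i - hybridVal m D D' r (i + 1) = cor D' (hybridHyp m D D' r i) / 2 := by
  set G : X × Bool → ℝ := fun p => ∫ z, r (Function.update z i p) ∂(hybridMeasure m D D' i)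
    with hG
  have hupd : Measurable
      (fun q : (X × Bool) × (Fin m → X × Bool) => Function.update q.2 i q.1) := by
    refine measurable_pi_lambda _ fun j => ?_
    by_cases h : j = i
    · subst h; simpa using measurable_fst
    · simp only [Function.update_of_ne h]; fun_prop
  have hru := hrm.comp hupd
  have hrb : ∀ z, ‖r z‖ ≤ 1 := fun z => by
    rw [Real.norm_eq_abs, abs_le]; constructor <;> linarith [(hr01 z).1, (hr01 z).2]
  have hGm : Measurable G :=
    (StronglyMeasurable.integral_prod_right (ν := hybridMeasure m D D' i)
      (f := fun p z => r (Function.update z i p)) hru.stronglyMeasurable).measurable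
  have hGb : ∀ p, ‖G p‖ ≤ 1 := fun p => by
    simpa using norm_integral_le_of_norm_le_const (μ := hybridMeasure m D D' i)
      (f := fun z => r (Function.update z i p)) (Filter.Eventually.of_forall fun z => hrb _)
  -- Replacing the `i`-th factor by `ν` turns the integral of `r` into that of `G` against `ν`.
  have key : ∀ ν : Measure (X × Bool), IsProbabilityMeasure ν →
      ∫ z, r z ∂(Measure.pi (Function.update
        (fun j : Fin m => if (j : ℕ) < i then D.prod unifLabel else D') i ν)) = ∫ p, G p ∂ν := by
    intro ν _
    rw [pi_update_eq_map, integral_map hupd.aemeasurable hrm.aestronglyMeasurable, integral_prod]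
    · rfl
    · exact Integrable.of_bound hru.aestronglyMeasurable 1
        (Filter.Eventually.of_forall fun z => hrb _)
  have h0 : hybridVal m D D' r i = ∫ p, G p ∂D' := by
    rw [← key D' inferInstance, hybridVal, hybridMeasure]
    congr 2
    symm
    rw [Function.update_eq_self_iff]
    simp
  have h1 : hybridVal m D D' r (i + 1) = ∫ p, G p ∂(D.prod unifLabel) := by
    rw [← key _ inferInstance, hybridVal, hybridMeasure]
    congr 2
    funext j
    by_cases hj : j = i
    · subst hj; simp
    · have : (j : ℕ) ≠ i := fun h => hj (Fin.ext h)
      rw [Function.update_of_ne hj]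
      have : (j : ℕ) < i + 1 ↔ (j : ℕ) < i := by omega
      simp only [this]
  have hGt : ∀ b, Measurable fun x => G (x, b) := fun b => hGm.comp (by fun_prop)
  have h2 : ∫ p, G p ∂(D.prod unifLabel) = ∫ p, (G (p.1, true) + G (p.1, false)) / 2 ∂D' := by
    rw [integral_prod _ (Integrable.of_bound hGm.aestronglyMeasurable 1
      (Filter.Eventually.of_forall hGb))]
    simp only [integral_unifLabel]
    rw [← hD', integral_map measurable_fst.aemeasurable]
    exact (((hGt true).add (hGt false)).div_const 2).aestronglyMeasurable
  have hi1 : Integrable G D' :=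
    Integrable.of_bound hGm.aestronglyMeasurable 1 (Filter.Eventually.of_forall hGb)
  have hi2 : ∀ b, Integrable (fun p : X × Bool => G (p.1, b)) D' := fun b =>
    Integrable.of_bound ((hGt b).comp measurable_fst).aestronglyMeasurable 1
      (Filter.Eventually.of_forall fun p => hGb _)
  have hi3 : Integrable (fun p : X × Bool => (G (p.1, true) + G (p.1, false)) / 2) D' :=
    ((hi2 true).add (hi2 false)).div_const 2
  rw [h0, h1, h2, ← integral_sub hi1 hi3, cor,
    ← integral_div]
  refine integral_congr_ae (Filter.Eventually.of_forall ?_)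
  rintro ⟨x, b⟩
  change G (x, b) - (G (x, true) + G (x, false)) / 2 =
    (G (x, true) - G (x, false)) * sgn b / 2
  cases b <;> simp [sgn] <;> ring

/-- nonuniform form of the paper's Lemma 3.2. Suppose `r` is a
`δ`-refutation test for `𝓒` over `𝒟` with `m` samples, and let `𝒟'` be any label distribution
consistent with `𝒟`. Build the hybrid hypotheses `h_1, …, h_m` from `F = r`. Then there exists
`h` in the finite list consisting of the constant-zero function together with `h_1, …, h_m`
such that `cor_{𝒟'}(h) ≥ (2/(3m))·(sup_{c∈𝓒} cor_{𝒟'}(c) − δ)`. -/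
theorem refutation_yields_good_hypothesis_in_list
    {X : Type*} [MeasurableSpace X]
    (D : Measure X) [IsProbabilityMeasure D]
    (𝓒 : Set (X → Bool)) (h𝓒ne : 𝓒.Nonempty) (h𝓒meas : ∀ c ∈ 𝓒, Measurable c)
    (δ : ℝ) (m : ℕ) (r : (Fin m → X × Bool) → ℝ)
    (hr : IsRefutationTest D 𝓒 δ m r)
    (D' : Measure (X × Bool)) [IsProbabilityMeasure D']
    (hD' : D'.map Prod.fst = D) :
    ∃ h : X → ℝ,
      ((h = fun _ => (0 : ℝ)) ∨ ∃ i : Fin m, h = hybridHyp m D D' r i) ∧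
      (2 / (3 * (m : ℝ))) * ((⨆ c ∈ 𝓒, cor D' (fun x => sgn (c x))) - δ) ≤ cor D' h := by
  classical
  obtain ⟨hrm, hr01, hcomp, hsound⟩ := hr
  set S : ℝ := ⨆ c ∈ 𝓒, cor D' (fun x => sgn (c x)) with hS
  have hzero : cor D' (fun _ => (0 : ℝ)) = 0 := by simp [cor]
  rcases lt_or_ge S δ with hlt | hge
  · refine ⟨_, Or.inl rfl, ?_⟩
    rw [hzero]
    exact mul_nonpos_of_nonneg_of_nonpos (by positivity) (by linarith)
  have hS1 : S ≤ 1 := by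
    refine Real.iSup_le (fun c => Real.iSup_le (fun _ => cor_sgn_le_one D' c) ?_) ?_ <;>
      norm_num
  have hδ : 0 < δ := by
    by_contra hneg
    have hsup : (⨆ c ∈ 𝓒, cor (D.prod unifLabel) (fun x => sgn (c x))) = 0 := by
      have : ∀ c, (⨆ _ : c ∈ 𝓒, cor (D.prod unifLabel) (fun x => sgn (c x))) = 0 := by
        intro c
        by_cases hc : c ∈ 𝓒
        · simp [hc, cor_prod_unifLabel D c (h𝓒meas c hc)]
        · simp [hc]
      simp [this]
    have := hcomp (D.prod unifLabel) inferInstance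
      (by rw [Measure.map_fst_prod, measure_univ, one_smul]) (by rw [hsup]; linarith)
    linarith
  rcases Nat.eq_zero_or_pos m with hm | hm
  · refine ⟨_, Or.inl rfl, ?_⟩
    -- For `m = 0` the factor `2 / (3 * m)` is `0`, so the zero hypothesis meets the bound.
    rw [hzero]
    simp [hm]
  have h0 : (2 : ℝ) / 3 ≤ hybridVal m D D' r 0 := by
    simpa [hybridVal, hybridMeasure] using hcomp D' inferInstance hD' hge
  have h1 : hybridVal m D D' r m ≤ 1 / 3 := by
    simpa [hybridVal, hybridMeasure] using hsound
  have hsum : ∑ i : Fin m, cor D' (hybridHyp m D D' r i) / 2 =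
      hybridVal m D D' r 0 - hybridVal m D D' r m := by
    simp_rw [← hybridVal_sub_succ D m r hrm hr01 D' hD']
    rw [Fin.sum_univ_eq_sum_range
      (fun k => hybridVal m D D' r k - hybridVal m D D' r (k + 1)), Finset.sum_range_sub']
  have hm' : (0 : ℝ) < m := by exact_mod_cast hm
  have : Nonempty (Fin m) := ⟨⟨0, hm⟩⟩
  obtain ⟨i, -, hi⟩ := Finset.exists_le_of_sum_le (s := (Finset.univ : Finset (Fin m)))
    (f := fun _ => 1 / (3 * (m : ℝ))) (g := fun i => cor D' (hybridHyp m D D' r i) / 2)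
    Finset.univ_nonempty (by
      rw [hsum]
      have : (m : ℝ) * (1 / (3 * (m : ℝ))) = 1 / 3 := by field_simp
      simp only [Finset.sum_const, Finset.card_univ, Fintype.card_fin, nsmul_eq_mul, this]
      linarith)
  refine ⟨_, Or.inr ⟨i, rfl⟩, ?_⟩
  calc 2 / (3 * (m : ℝ)) * (S - δ) ≤ 2 / (3 * (m : ℝ)) * 1 := by gcongr; linarith
    _ = 2 * (1 / (3 * (m : ℝ))) := by ring
    _ ≤ cor D' (hybridHyp m D D' r i) := by linarith
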